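/- arXiv:2204.00870 — 3 statements merged into one kernel-verified Lean document; each statement's English description precedes it below -/
import Mathlib

section
/- Let a transition system with states S, total successor relation step, terminal set Term (terminal states only step to themselves), initial set Init, and cost valuation c : S → ℤ be terminating, and let φ : S → ℝ be a potential function for it. Then for every reachable state s and every run ρ from s, the cost of ρ is bounded above by φ(s), i.e. (c(ρ N) − c(s) : ℝ) ≤ φ(s) where N is the first index at which ρ is terminal. (Consequently φ(s) is an upper bound on the maximal cost CostSup(s) of runs from s.) -/
/-- A run of the transition system from state `s`. -/
def IsRun {S : Type*} (step : S → S → Prop) (s : S) (ρ : ℕ → S) : Prop :=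
  ρ 0 = s ∧ ∀ n, step (ρ n) (ρ (n + 1))

/-- `s'` is reachable from `s`. -/
def ReachableFrom {S : Type*} (step : S → S → Prop) (s s' : S) : Prop :=
  ∃ ρ n, IsRun step s ρ ∧ ρ n = s'

/-- `s'` is reachable from some initial state in `Init`. -/
def Reachable {S : Type*} (step : S → S → Prop) (Init : Set S) (s' : S) : Prop :=
  ∃ s ∈ Init, ReachableFrom step s s'

/-- The system is terminating: every run from a reachable state visits a terminal state. -/
def Terminating {S : Type*} (step : S → S → Prop) (Term Init : Set S) : Prop :=
  ∀ s, Reachable step Init s → ∀ ρ, IsRun step s ρ → ∃ n, ρ n ∈ Term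

/-- The cost of a run: `c (ρ N) - c (ρ 0)` where `N` is the least index with `ρ N ∈ Term`. -/
noncomputable def RunCost {S : Type*} (Term : Set S) (c : S → ℤ) (ρ : ℕ → S) : ℤ :=
  c (ρ (sInf {n | ρ n ∈ Term})) - c (ρ 0)

/-- Potential function: sufficiency preservation and sufficiency on termination. -/
def IsPF {S : Type*} (step : S → S → Prop) (Term Init : Set S) (c : S → ℤ)
    (φ : S → ℝ) : Prop :=
  (∀ s s', Reachable step Init s → step s s' →
    φ s ≥ φ s' + ((c s' : ℝ) - (c s : ℝ))) ∧
  (∀ s, Reachable step Init s → s ∈ Term → φ s ≥ 0)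

/-- Anti-potential function: insufficiency preservation and insufficiency on termination. -/
def IsAntiPF {S : Type*} (step : S → S → Prop) (Term Init : Set S) (c : S → ℤ)
    (χ : S → ℝ) : Prop :=
  (∀ s s', Reachable step Init s → step s s' →
    χ s ≤ χ s' + ((c s' : ℝ) - (c s : ℝ))) ∧
  (∀ s, Reachable step Init s → s ∈ Term → χ s ≤ 0)

/-- A state visited by a run from a reachable state is reachable. -/
theorem Reachable.of_isRun {S : Type*} {step : S → S → Prop} {Init : Set S} {s : S}
    (hs : Reachable step Init s) {ρ : ℕ → S} (hρ : IsRun step s ρ) (n : ℕ) :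
    Reachable step Init (ρ n) := by
  obtain ⟨i, hi, σ, m, ⟨hσ0, hσ⟩, hσm⟩ := hs
  obtain ⟨hρ0, hρ⟩ := hρ
  refine ⟨i, hi, fun k => if k ≤ m then σ k else ρ (k - m), m + n, ⟨by simpa using hσ0, ?_⟩, ?_⟩
  · intro k
    rcases lt_trichotomy k m with h | rfl | h
    · simpa [h.le, Nat.succ_le_of_lt h] using hσ k
    · simpa [hσm, ← hρ0] using hρ 0
    · have h₁ : ¬ k ≤ m := by omega
      have h₂ : ¬ k + 1 ≤ m := by omega
      have h₃ : k + 1 - m = k - m + 1 := by omega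
      simpa only [h₁, h₂, h₃, if_false] using hρ (k - m)
  · rcases Nat.eq_zero_or_pos n with rfl | h
    · simp [hσm, hρ0]
    · simp [h.ne']

/-- Along a run from a reachable state, a potential function pays for the cost incurred so far. -/
theorem IsPF.add_cost_le {S : Type*} {step : S → S → Prop} {Term Init : Set S} {c : S → ℤ}
    {φ : S → ℝ} (hφ : IsPF step Term Init c φ) {s : S} (hs : Reachable step Init s)
    {ρ : ℕ → S} (hρ : IsRun step s ρ) (n : ℕ) :
    φ (ρ n) + ((c (ρ n) : ℝ) - (c s : ℝ)) ≤ φ s := by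
  induction n with
  | zero => simp [hρ.1]
  | succ n ih => linarith [hφ.1 _ _ (hs.of_isRun hρ n) (hρ.2 n)]

/-- a potential function upper-bounds the cost of every run from a
reachable state in a terminating transition system. -/
theorem potential_upper_bounds_cost {S : Type*}
    (step : S → S → Prop) (Term Init : Set S) (c : S → ℤ)
    (htotal : ∀ s : S, ∃ s', step s s')
    (hTerm : ∀ s ∈ Term, ∀ s', step s s' → s' = s)
    (hterminating : Terminating step Term Init)
    (φ : S → ℝ) (hφ : IsPF step Term Init c φ)
    (s : S) (hs : Reachable step Init s)
    (ρ : ℕ → S) (hρ : IsRun step s ρ)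
    (N : ℕ) (hN : ρ N ∈ Term) (hNmin : ∀ m < N, ρ m ∉ Term) :
    ((c (ρ N) : ℝ) - (c s : ℝ)) ≤ φ s := by
  linarith [hφ.add_cost_le hs hρ N, hφ.2 _ (hs.of_isRun hρ N) hN]
end

section
/- Let a transition system with states S, total successor relation step, terminal set Term (terminal states only step to themselves), initial set Init, and cost valuation c : S → ℤ be terminating, and assume that for every reachable state s the set of costs {Cost(ρ) : ρ a run from s} is bounded above. Then the function Φ : S → ℝ defined on each state s by Φ(s) = sSup {(Cost(ρ) : ℝ) : ρ a run from s} is a potential function: it satisfies the sufficiency preservation condition at every reachable state and its successors, and it is nonnegative at every reachable terminal state. -/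
theorem exists_isRun {S : Type*} {step : S → S → Prop} (htotal : ∀ s, ∃ s', step s s') (s : S) :
    ∃ ρ, IsRun step s ρ := by
  choose next hnext using htotal
  refine ⟨fun n => next^[n] s, rfl, fun n => ?_⟩
  simpa only [Function.iterate_succ_apply'] using hnext (next^[n] s)

/-- Prepending a predecessor to a run gives a run. -/
theorem IsRun.cons {S : Type*} {step : S → S → Prop} {s s' : S} {ρ : ℕ → S}
    (hρ : IsRun step s' ρ) (h : step s s') :
    IsRun step s (fun n => Nat.casesOn n s ρ) := by
  refine ⟨rfl, fun n => ?_⟩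
  cases n with
  | zero => exact (hρ.1.symm ▸ h : step s (ρ 0))
  | succ n => exact hρ.2 n

theorem runCost_eq_zero {S : Type*} {Term : Set S} (c : S → ℤ) {ρ : ℕ → S} (h : ρ 0 ∈ Term) :
    RunCost Term c ρ = 0 := by
  have h0 : sInf {n | ρ n ∈ Term} = 0 := Nat.sInf_eq_zero.2 (Or.inl h)
  simp [RunCost, h0]

theorem runCost_cons {S : Type*} {Term : Set S} (c : S → ℤ) {s : S} {ρ : ℕ → S}
    (hs : s ∉ Term) (hρ : ∃ n, ρ n ∈ Term) :
    RunCost Term c (fun n => Nat.casesOn n s ρ) = RunCost Term c ρ + (c (ρ 0) - c s) := by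
  set σ : ℕ → S := fun n => Nat.casesOn n s ρ
  have hne : {n | σ n ∈ Term}.Nonempty := hρ.elim fun n hn => ⟨n + 1, hn⟩
  have hpos : 1 ≤ sInf {n | σ n ∈ Term} := by
    refine Nat.one_le_iff_ne_zero.2 fun h0 => hs ?_
    have hmem := Nat.sInf_mem hne
    rwa [h0] at hmem
  have hshift : sInf {n | ρ n ∈ Term} + 1 = sInf {n | σ n ∈ Term} :=
    Nat.sInf_add (p := fun n => σ n ∈ Term) hpos
  have hcost : RunCost Term c σ = c (ρ (sInf {n | ρ n ∈ Term})) - c s := by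
    rw [RunCost, ← hshift]
    rfl
  rw [hcost, RunCost]
  ring

/-- the pointwise supremum of run costs is a potential function. -/
theorem costSup_is_potential {S : Type*}
    (step : S → S → Prop) (Term Init : Set S) (c : S → ℤ)
    (htotal : ∀ s : S, ∃ s', step s s')
    (hTerm : ∀ s ∈ Term, ∀ s', step s s' → s' = s)
    (hterminating : Terminating step Term Init)
    (hbdd : ∀ s, Reachable step Init s →
      BddAbove {x : ℝ | ∃ ρ : ℕ → S, IsRun step s ρ ∧ x = (RunCost Term c ρ : ℝ)}) :
    IsPF step Term Init c
      (fun s => sSup {x : ℝ | ∃ ρ : ℕ → S, IsRun step s ρ ∧ x = (RunCost Term c ρ : ℝ)}) := by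
  refine ⟨fun s s' hs hstep => ?_, fun s hs hsT => ?_⟩
  · by_cases hsT : s ∈ Term
    · obtain rfl := hTerm s hsT s' hstep
      simp
    · rw [ge_iff_le, ← le_sub_iff_add_le]
      obtain ⟨ρ₀, hρ₀⟩ := exists_isRun htotal s'
      refine csSup_le ⟨_, ρ₀, hρ₀, rfl⟩ ?_
      rintro _ ⟨ρ, hρ, rfl⟩
      have hvisit : ∃ n, ρ n ∈ Term := by
        obtain ⟨n, hn⟩ := hterminating s hs _ (hρ.cons hstep)
        cases n with
        | zero => exact absurd hn hsT
        | succ n => exact ⟨n, hn⟩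
      have hle := le_csSup (hbdd s hs) ⟨_, hρ.cons hstep, rfl⟩
      rw [runCost_cons c hsT hvisit, hρ.1] at hle
      push_cast at hle
      exact le_sub_iff_add_le.2 hle
  · obtain ⟨ρ, hρ⟩ := exists_isRun htotal s
    have hcost : RunCost Term c ρ = 0 := runCost_eq_zero c (hρ.1.symm ▸ hsT)
    exact le_csSup (hbdd s hs) ⟨ρ, hρ, by simp [hcost]⟩
end

section
/- Let T_new and T_old be two terminating transition systems sharing an input type X, input set Θ₀, and initial-state maps ι_new, ι_old. Suppose χ_new is an anti-potential function for T_new and φ_old is a potential function for T_old. Then for every input x ∈ Θ₀, every run ρ_new from ι_new x in T_new and every run ρ_old from ι_old x in T_old, Cost(ρ_new) − Cost(ρ_old) ≥ χ_new(ι_new x) − φ_old(ι_old x). -/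
/-- `t` is a threshold for the DiffCost problem. -/
noncomputable def IsThreshold {Sn So X : Type*}
    (stepN : Sn → Sn → Prop) (TermN : Set Sn) (cN : Sn → ℤ)
    (stepO : So → So → Prop) (TermO : Set So) (cO : So → ℤ)
    (Θ₀ : Set X) (ιN : X → Sn) (ιO : X → So) (t : ℝ) : Prop :=
  ∀ x ∈ Θ₀, ∀ ρN : ℕ → Sn, IsRun stepN (ιN x) ρN →
    ∀ ρO : ℕ → So, IsRun stepO (ιO x) ρO →
      ((RunCost TermN cN ρN : ℝ) - (RunCost TermO cO ρO : ℝ)) ≤ t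

/-- Every state visited by a run from an initial state is reachable. -/
theorem IsRun.reachable {S : Type*} {step : S → S → Prop} {Init : Set S} {s : S} {ρ : ℕ → S}
    (hρ : IsRun step s ρ) (hs : s ∈ Init) (n : ℕ) : Reachable step Init (ρ n) :=
  ⟨s, hs, ρ, n, hρ, rfl⟩

/-- In a terminating system, the index used in `RunCost` is that of a terminal state. -/
theorem Terminating.sInf_mem {S : Type*} {step : S → S → Prop} {Term Init : Set S} {s : S}
    {ρ : ℕ → S} (hT : Terminating step Term Init) (hs : s ∈ Init) (hρ : IsRun step s ρ) :
    ρ (sInf {n | ρ n ∈ Term}) ∈ Term :=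
  Nat.sInf_mem (s := {n | ρ n ∈ Term}) (hT s ⟨s, hs, ρ, 0, hρ, hρ.1⟩ ρ hρ)

/-- An anti-potential function bounds the cost of every run from below. -/
theorem IsAntiPF.le_runCost {S : Type*} {step : S → S → Prop} {Term Init : Set S} {c : S → ℤ}
    {χ : S → ℝ} {s : S} {ρ : ℕ → S} (hχ : IsAntiPF step Term Init c χ)
    (hT : Terminating step Term Init) (hs : s ∈ Init) (hρ : IsRun step s ρ) :
    χ s ≤ (RunCost Term c ρ : ℝ) := by
  have hmono : Monotone fun n => χ (ρ n) + (c (ρ n) : ℝ) := monotone_nat_of_le_succ fun n => by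
    linarith [hχ.1 _ _ (hρ.reachable hs n) (hρ.2 n)]
  have hstart := hmono (Nat.zero_le (sInf {n | ρ n ∈ Term}))
  have hend := hχ.2 _ (hρ.reachable hs _) (hT.sInf_mem hs hρ)
  rw [← hρ.1, RunCost]
  push_cast
  linarith

/-- The negation of a potential function is an anti-potential function for the negated cost. -/
theorem IsPF.neg {S : Type*} {step : S → S → Prop} {Term Init : Set S} {c : S → ℤ}
    {φ : S → ℝ} (hφ : IsPF step Term Init c φ) : IsAntiPF step Term Init (-c) (-φ) := by
  refine ⟨fun s s' hs hstep => ?_, fun s hs hsT => ?_⟩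
  · have := hφ.1 s s' hs hstep
    simp only [Pi.neg_apply, Int.cast_neg]
    linarith
  · simpa using hφ.2 s hs hsT

/-- A potential function bounds the cost of every run from above. -/
theorem IsPF.runCost_le {S : Type*} {step : S → S → Prop} {Term Init : Set S} {c : S → ℤ}
    {φ : S → ℝ} {s : S} {ρ : ℕ → S} (hφ : IsPF step Term Init c φ)
    (hT : Terminating step Term Init) (hs : s ∈ Init) (hρ : IsRun step s ρ) :
    (RunCost Term c ρ : ℝ) ≤ φ s := by
  have := hφ.neg.le_runCost hT hs hρ
  simp only [RunCost, Pi.neg_apply, Int.cast_sub, Int.cast_neg] at this ⊢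
  linarith

/-- an anti-PF for the new system and a PF for the old system lower-bound
the difference in cost between the two systems on any shared input. -/
theorem antipf_pf_lower_bound_diffcost {Sn So X : Type*}
    (stepN : Sn → Sn → Prop) (TermN : Set Sn) (cN : Sn → ℤ)
    (stepO : So → So → Prop) (TermO : Set So) (cO : So → ℤ)
    (Θ₀ : Set X) (ιN : X → Sn) (ιO : X → So)
    (htotalN : ∀ s : Sn, ∃ s', stepN s s')
    (htotalO : ∀ s : So, ∃ s', stepO s s')
    (hTermN : ∀ s ∈ TermN, ∀ s', stepN s s' → s' = s)
    (hTermO : ∀ s ∈ TermO, ∀ s', stepO s s' → s' = s)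
    (hterminatingN : Terminating stepN TermN (ιN '' Θ₀))
    (hterminatingO : Terminating stepO TermO (ιO '' Θ₀))
    (χN : Sn → ℝ) (hχN : IsAntiPF stepN TermN (ιN '' Θ₀) cN χN)
    (φO : So → ℝ) (hφO : IsPF stepO TermO (ιO '' Θ₀) cO φO)
    (x : X) (hx : x ∈ Θ₀)
    (ρN : ℕ → Sn) (hρN : IsRun stepN (ιN x) ρN)
    (ρO : ℕ → So) (hρO : IsRun stepO (ιO x) ρO) :
    χN (ιN x) - φO (ιO x) ≤ ((RunCost TermN cN ρN : ℝ) - (RunCost TermO cO ρO : ℝ)) := by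
  exact sub_le_sub (hχN.le_runCost hterminatingN (Set.mem_image_of_mem ιN hx) hρN)
    (hφO.runCost_le hterminatingO (Set.mem_image_of_mem ιO hx) hρO)
end
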